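/- For real numbers d, a, b, c, t, x, y, z, let Q₁* be the anti-quaternion matrix associated with (d,a,b,c), let Q₂ be the matrix quaternion associated with (t,x,y,z), and let T be the tetragonal transformation on 4×4 matrices. Then T(Q₁*·Q₂) = 2·B, where B is the rank-one outer-product matrix with rows (dt, at, bt, ct), (dx, ax, bx, cx), (dy, ay, by, cy), (dz, az, bz, cz), i.e. B_{ij} = (t,x,y,z)_i · (d,a,b,c)_j. -/

import Mathlib

/-- De Casteljau's matrix quaternion associated with `(t,x,y,z) ∈ ℝ⁴`. -/
def matQ (t x y z : ℝ) : Matrix (Fin 4) (Fin 4) ℝ :=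
  !![t, -x, -y, -z;
     x,  t, -z,  y;
     y,  z,  t, -x;
     z, -y,  x,  t]

/-- De Casteljau's anti-quaternion associated with `(t,x,y,z) ∈ ℝ⁴`. -/
def antiQ (t x y z : ℝ) : Matrix (Fin 4) (Fin 4) ℝ :=
  !![ t,  x,  y,  z;
     -x,  t, -z,  y;
     -y,  z,  t, -x;
     -z, -y,  x,  t]

/-- De Casteljau's tetragonal transformation on 4×4 real matrices
(equation (13) of *Les Quaternions*). -/
noncomputable def tetragonal (A : Matrix (Fin 4) (Fin 4) ℝ) : Matrix (Fin 4) (Fin 4) ℝ :=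
  (1 / 2 : ℝ) •
    !![A 0 0 + A 1 1 + A 2 2 + A 3 3,  A 0 1 - A 1 0 - A 2 3 + A 3 2,
       A 0 2 + A 1 3 - A 2 0 - A 3 1,  A 0 3 - A 1 2 + A 2 1 - A 3 0;
       -A 0 1 + A 1 0 - A 2 3 + A 3 2, A 0 0 + A 1 1 - A 2 2 - A 3 3,
       -A 0 3 + A 1 2 + A 2 1 - A 3 0, A 0 2 + A 1 3 + A 2 0 + A 3 1;
       -A 0 2 + A 1 3 + A 2 0 - A 3 1, A 0 3 + A 1 2 + A 2 1 + A 3 0,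
       A 0 0 - A 1 1 + A 2 2 - A 3 3,  -A 0 1 - A 1 0 + A 2 3 + A 3 2;
       -A 0 3 - A 1 2 + A 2 1 + A 3 0, -A 0 2 + A 1 3 - A 2 0 + A 3 1,
       A 0 1 + A 1 0 + A 2 3 + A 3 2,  A 0 0 - A 1 1 - A 2 2 + A 3 3]

/-!
Write `p = d + ai + bj + ck` and `q = t + xi + yj + zk`. In the basis `e = (1, i, j, k)` of `ℍ`,
the matrix `Q₁*·Q₂` represents the two-sided multiplication `v ↦ q v p̄`. The entry `(i, j)` of
`2·T(A)` is the Frobenius inner product of `A` with the matrix of the isometry `v ↦ eᵢ v ēⱼ`. As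
the transpose of that matrix is its inverse, this is the trace of `A` followed by `v ↦ ēᵢ v eⱼ`.
For `A = Q₁*·Q₂` the composite is `v ↦ (ēᵢ q) v (p̄ eⱼ)`. The trace of `v ↦ u v w` is
`4 (re u) (re w)`, and `re (ēᵢ q)` and `re (p̄ eⱼ)` are the coordinates `qᵢ` and `pⱼ`, so
`2·T(A)` has `(i, j)` entry `4 qᵢ pⱼ`.
-/

open scoped Quaternion

theorem mulLeftRight_mul_mulLeftRight {R A : Type*} [CommSemiring R] [Semiring A] [Algebra R A]
    (a b c d : A) :
    LinearMap.mulLeftRight R (a, b) * LinearMap.mulLeftRight R (c, d) =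
      LinearMap.mulLeftRight R (a * c, d * b) := by
  ext v
  simp [mul_assoc]

section Quaternion

variable {R : Type*} [CommRing R]

theorem trace_mulLeftRight_quaternionAlgebra {c₁ c₂ c₃ : R} (u w : ℍ[R,c₁,c₂,c₃]) :
    LinearMap.trace R ℍ[R,c₁,c₂,c₃] (LinearMap.mulLeftRight R (u, w)) =
      (2 * u.re + c₂ * u.imI) * (2 * w.re + c₂ * w.imI) := by
  rw [LinearMap.trace_eq_matrix_trace R (QuaternionAlgebra.basisOneIJK c₁ c₂ c₃)]
  simp [Matrix.trace, LinearMap.toMatrix_apply, Fin.sum_univ_four, QuaternionAlgebra.basisOneIJK]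
  ring

theorem trace_mulLeftRight_quaternion (u w : ℍ[R]) :
    LinearMap.trace R ℍ[R] (LinearMap.mulLeftRight R (u, w)) = 4 * (u.re * w.re) :=
  (trace_mulLeftRight_quaternionAlgebra u w).trans (by ring)

variable (R) in
/-- The basis `1, i, j, k` of Hamilton's quaternions over `R`, in which the matrices are written. -/
noncomputable def quaternionBasis : Module.Basis (Fin 4) R ℍ[R] :=
  QuaternionAlgebra.basisOneIJK (-1) 0 (-1)

theorem coe_quaternionBasis_repr (q : ℍ[R]) :
    (quaternionBasis R).repr q = ![q.re, q.imI, q.imJ, q.imK] :=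
  rfl

@[simp]
theorem re_quaternionBasis (i : Fin 4) : (quaternionBasis R i).re = if i = 0 then 1 else 0 :=
  (quaternionBasis R).repr_self_apply i 0

@[simp]
theorem imI_quaternionBasis (i : Fin 4) : (quaternionBasis R i).imI = if i = 1 then 1 else 0 :=
  (quaternionBasis R).repr_self_apply i 1

@[simp]
theorem imJ_quaternionBasis (i : Fin 4) : (quaternionBasis R i).imJ = if i = 2 then 1 else 0 :=
  (quaternionBasis R).repr_self_apply i 2

@[simp]
theorem imK_quaternionBasis (i : Fin 4) : (quaternionBasis R i).imK = if i = 3 then 1 else 0 :=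
  (quaternionBasis R).repr_self_apply i 3

theorem re_star_quaternionBasis_mul (i : Fin 4) (q : ℍ[R]) :
    (star (quaternionBasis R i) * q).re = (quaternionBasis R).repr q i := by
  fin_cases i <;> simp [coe_quaternionBasis_repr]

theorem re_mul_quaternionBasis (w : ℍ[R]) (j : Fin 4) :
    (w * quaternionBasis R j).re = (quaternionBasis R).repr (star w) j := by
  rw [← re_star_quaternionBasis_mul, ← Quaternion.re_star, star_mul]

end Quaternion

theorem matQ_eq_toMatrix_mulLeft (q : ℍ[ℝ]) :
    matQ q.re q.imI q.imJ q.imK =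
      LinearMap.toMatrix (quaternionBasis ℝ) (quaternionBasis ℝ) (LinearMap.mulLeft ℝ q) := by
  ext i j
  rw [LinearMap.toMatrix_apply, LinearMap.mulLeft_apply, coe_quaternionBasis_repr]
  fin_cases i <;> fin_cases j <;> simp [matQ]

theorem antiQ_eq_toMatrix_mulRight_star (p : ℍ[ℝ]) :
    antiQ p.re p.imI p.imJ p.imK =
      LinearMap.toMatrix (quaternionBasis ℝ) (quaternionBasis ℝ)
        (LinearMap.mulRight ℝ (star p)) := by
  ext i j
  rw [LinearMap.toMatrix_apply, LinearMap.mulRight_apply, coe_quaternionBasis_repr]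
  fin_cases i <;> fin_cases j <;> simp [antiQ]

theorem antiQ_mul_matQ (p q : ℍ[ℝ]) :
    antiQ p.re p.imI p.imJ p.imK * matQ q.re q.imI q.imJ q.imK =
      LinearMap.toMatrix (quaternionBasis ℝ) (quaternionBasis ℝ)
        (LinearMap.mulLeftRight ℝ (q, star p)) := by
  rw [antiQ_eq_toMatrix_mulRight_star, matQ_eq_toMatrix_mulLeft, ← LinearMap.toMatrix_mul]
  rfl

theorem tetragonal_apply_eq_trace (A : Matrix (Fin 4) (Fin 4) ℝ) (i j : Fin 4) :
    tetragonal A i j = 1 / 2 * (LinearMap.toMatrix (quaternionBasis ℝ) (quaternionBasis ℝ)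
      (LinearMap.mulLeftRight ℝ (star (quaternionBasis ℝ i), quaternionBasis ℝ j)) * A).trace := by
  simp only [Matrix.trace, Matrix.diag_apply, Matrix.mul_apply, Fin.sum_univ_four,
    LinearMap.toMatrix_apply, LinearMap.mulLeftRight_apply, coe_quaternionBasis_repr]
  fin_cases i <;> fin_cases j <;> simp [tetragonal] <;> ring

theorem tetragonal_toMatrix_mulLeftRight (u w : ℍ[ℝ]) (i j : Fin 4) :
    tetragonal (LinearMap.toMatrix (quaternionBasis ℝ) (quaternionBasis ℝ)
      (LinearMap.mulLeftRight ℝ (u, w))) i j =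
      2 * ((quaternionBasis ℝ).repr u i * (quaternionBasis ℝ).repr (star w) j) := by
  rw [tetragonal_apply_eq_trace, ← LinearMap.toMatrix_mul, ← LinearMap.trace_eq_matrix_trace,
    mulLeftRight_mul_mulLeftRight, trace_mulLeftRight_quaternion, re_star_quaternionBasis_mul,
    re_mul_quaternionBasis]
  ring

/-- The tetragonal transformation recovers the factorising vectors from a
quaternion–anti-quaternion product: `T(Q₁*·Q₂) = 2·B` with
`B i j = (t,x,y,z) i · (d,a,b,c) j`. -/
theorem tetragonal_of_product (d a b c t x y z : ℝ)
    (B : Matrix (Fin 4) (Fin 4) ℝ)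
    (hB : ∀ i j : Fin 4, B i j = ![t, x, y, z] i * ![d, a, b, c] j) :
    tetragonal (antiQ d a b c * matQ t x y z) = (2 : ℝ) • B := by
  let p : ℍ[ℝ] := ⟨d, a, b, c⟩
  let q : ℍ[ℝ] := ⟨t, x, y, z⟩
  ext i j
  calc tetragonal (antiQ d a b c * matQ t x y z) i j
    _ = tetragonal (LinearMap.toMatrix (quaternionBasis ℝ) (quaternionBasis ℝ)
          (LinearMap.mulLeftRight ℝ (q, star p))) i j := by rw [← antiQ_mul_matQ]
    _ = 2 * ((quaternionBasis ℝ).repr q i * (quaternionBasis ℝ).repr p j) := by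
          rw [tetragonal_toMatrix_mulLeftRight, star_star]
    _ = ((2 : ℝ) • B) i j := by
          rw [Matrix.smul_apply, smul_eq_mul, hB, coe_quaternionBasis_repr,
            coe_quaternionBasis_repr]
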